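/- Let N be a finite set of players with a distinguished platform player w_p ∈ N, and let S be a finite index set of sessions, where session s is an owner map P_s : {0,1,…,n_s} → N (n_s ≥ 1) with P_s(0) = w_p and P_s(k) ≠ w_p for 1 ≤ k ≤ n_s, together with revenues r_s : {1,…,n_s} → ℝ. Let Ṽ be the multi-session game under Assumptions 1 and 3. Then for every player i ∈ N, the Shapley value of i in Ṽ equals Sh_i(Ṽ) = Σ_{s ∈ S} Σ_{k=1}^{n_s} ([i ∈ {P_s(0),P_s(k)}] / 2) · r_s(k), where [i ∈ {P_s(0),P_s(k)}] is 1 if i ∈ {P_s(0),P_s(k)} and 0 otherwise. -/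

import Mathlib

open Finset

/-! The game is a linear combination of unanimity games `u_T`, one for each pair
`T = {P_s(0), P_s(k)}`, and the Shapley value is linear, so it is enough to find the value of `u_T`.
Players outside `T` are null and get `0`; players of `T` are interchangeable and share
`u_T(N) - u_T(∅) = 1` equally, by efficiency, so each of them gets `1 / |T|`. -/

section Weight

variable (K : Type*) [Field K]

/-- The weight `f! (n - f - 1)! / n!` of a coalition of `f` players in the Shapley value of one of
the other players of an `n`-player game. It is meaningful for `f < n` only: `n - f - 1` is a
truncated subtraction. -/
def shapleyWeight (n f : ℕ) : K :=
  (f.factorial * (n - f - 1).factorial : K) / n.factorial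

variable [CharZero K] {n f : ℕ}

lemma succ_mul_shapleyWeight (h : f < n) :
    ((f + 1 : ℕ) : K) * shapleyWeight K n f = (n.choose (f + 1) : K)⁻¹ := by
  rw [Nat.cast_choose K h, inv_div, shapleyWeight, Nat.factorial_succ, Nat.sub_sub]
  push_cast
  ring

lemma sub_mul_shapleyWeight (h : f < n) :
    ((n - f : ℕ) : K) * shapleyWeight K n f = (n.choose f : K)⁻¹ := by
  rw [Nat.cast_choose K h.le, inv_div, shapleyWeight,
    ← Nat.mul_factorial_pred (Nat.sub_ne_zero_of_lt h)]
  push_cast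
  ring

end Weight

section DoubleCounting

variable {N M : Type*} [Fintype N] [DecidableEq N] [AddCommMonoid M]

lemma sum_sum_powerset_erase (f : Finset N → M) :
    ∑ i, ∑ F ∈ (univ.erase i).powerset, f F = ∑ F, #Fᶜ • f F := by
  rw [sum_comm' (t' := univ) (s' := compl) (by simp [subset_erase])]
  simp only [sum_const]

lemma sum_powerset_erase_insert (i : N) (f : Finset N → M) :
    ∑ F ∈ (univ.erase i).powerset, f (insert i F) = ∑ G with i ∈ G, f G :=
  sum_nbij' (insert i) (erase · i) (by simp) (by simp [subset_erase])
    (by simp +contextual [subset_erase]) (by simp +contextual) (by simp)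

lemma sum_sum_powerset_erase_insert (f : Finset N → M) :
    ∑ i, ∑ F ∈ (univ.erase i).powerset, f (insert i F) = ∑ G, #G • f G := by
  simp only [sum_powerset_erase_insert]
  rw [sum_comm' (t' := univ) (s' := id) (by simp)]
  simp only [id, sum_const]

end DoubleCounting

section ShapleyValue

variable {K N M : Type*} [Field K] [Fintype N] [DecidableEq N] [Fintype M] [DecidableEq M]

/-- The Shapley value of player `i`, as a linear functional on the games `Finset N → K`. -/
def shapleyValue (i : N) : (Finset N → K) →ₗ[K] K where
  toFun w := ∑ F ∈ (univ.erase i).powerset,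
    shapleyWeight K (Fintype.card N) #F * (w (insert i F) - w F)
  map_add' v w := by
    simp only [Pi.add_apply, add_sub_add_comm, mul_add, sum_add_distrib]
  map_smul' c w := by
    simp only [Pi.smul_apply, smul_eq_mul, ← mul_sub, mul_left_comm _ c, ← mul_sum,
      RingHom.id_apply]

lemma shapleyValue_apply (i : N) (w : Finset N → K) :
    shapleyValue i w = ∑ F ∈ (univ.erase i).powerset,
      shapleyWeight K (Fintype.card N) #F * (w (insert i F) - w F) :=
  rfl

lemma shapleyValue_eq_zero_of_null {i : N} {w : Finset N → K} (h : ∀ F, w (insert i F) = w F) :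
    shapleyValue i w = 0 := by
  simp [shapleyValue_apply, h]

lemma shapleyValue_apply_equiv (e : N ≃ M) (i : N) (w : Finset M → K) :
    shapleyValue (e i) w = shapleyValue i fun F ↦ w (F.map e.toEmbedding) := by
  rw [shapleyValue_apply, shapleyValue_apply]
  symm
  refine sum_equiv e.finsetCongr (by simp [subset_erase]) fun F _ ↦ ?_
  simp [Fintype.card_congr e, map_insert]

lemma sum_sum_shapleyWeight_mul_insert [CharZero K] (w : Finset N → K) :
    ∑ i, ∑ F ∈ (univ.erase i).powerset, shapleyWeight K (Fintype.card N) #F * w (insert i F) =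
      ∑ G, ((Fintype.card N).choose #G : K)⁻¹ * w G - w ∅ := by
  let f (G : Finset N) : K := shapleyWeight K (Fintype.card N) (#G - 1) * w G
  calc
    _ = ∑ i, ∑ F ∈ (univ.erase i).powerset, f (insert i F) := by
      refine sum_congr rfl fun i _ ↦ sum_congr rfl fun F hF ↦ ?_
      have hi : i ∉ F := (subset_erase.1 (mem_powerset.1 hF)).2
      simp [f, hi]
    _ = ∑ G ∈ univ.erase ∅, #G • f G := by
      rw [sum_sum_powerset_erase_insert, sum_erase _ (by simp)]
    _ = ∑ G ∈ univ.erase ∅, ((Fintype.card N).choose #G : K)⁻¹ * w G := by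
      refine sum_congr rfl fun G hG ↦ ?_
      obtain ⟨m, hm⟩ := Nat.exists_eq_succ_of_ne_zero (card_ne_zero.2 <|
        nonempty_iff_ne_empty.2 (ne_of_mem_erase hG))
      have hlt : m < Fintype.card N := by have := card_le_univ G; omega
      simp only [f, hm, Nat.succ_eq_add_one, Nat.add_sub_cancel, nsmul_eq_mul, ← mul_assoc,
        succ_mul_shapleyWeight K hlt]
    _ = _ := by simp [sum_erase_eq_sub]

lemma sum_sum_shapleyWeight_mul [CharZero K] (w : Finset N → K) :
    ∑ i : N, ∑ F ∈ (univ.erase i).powerset, shapleyWeight K (Fintype.card N) #F * w F =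
      ∑ F, ((Fintype.card N).choose #F : K)⁻¹ * w F - w univ := by
  calc
    _ = ∑ F ∈ univ.erase univ, #Fᶜ • (shapleyWeight K (Fintype.card N) #F * w F) := by
      rw [sum_sum_powerset_erase, sum_erase _ (by simp)]
    _ = ∑ F ∈ univ.erase univ, ((Fintype.card N).choose #F : K)⁻¹ * w F := by
      refine sum_congr rfl fun F hF ↦ ?_
      have hlt : #F < Fintype.card N := (card_lt_iff_ne_univ F).2 (ne_of_mem_erase hF)
      rw [card_compl, nsmul_eq_mul, ← mul_assoc, sub_mul_shapleyWeight K hlt]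
    _ = _ := by simp [sum_erase_eq_sub]

theorem sum_shapleyValue [CharZero K] (w : Finset N → K) :
    ∑ i, shapleyValue i w = w univ - w ∅ := by
  simp only [shapleyValue_apply, mul_sub, sum_sub_distrib, sum_sum_shapleyWeight_mul_insert,
    sum_sum_shapleyWeight_mul]
  ring

end ShapleyValue

section Unanimity

variable (K : Type*) {N : Type*} [Field K] [DecidableEq N]

/-- The unanimity game of `T`: a coalition earns `1` if it contains `T`, and nothing otherwise. -/
def unanimityGame (T F : Finset N) : K :=
  if T ⊆ F then 1 else 0

variable {T : Finset N} {i j : N}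

lemma unanimityGame_map_swap (hi : i ∈ T) (hj : j ∈ T) (F : Finset N) :
    unanimityGame K T (F.map (Equiv.swap i j).toEmbedding) = unanimityGame K T F := by
  have hT : T.map (Equiv.swap i j).toEmbedding = T := by
    refine map_perm fun a ha ↦ ?_
    by_contra haT
    exact ha (Equiv.swap_apply_of_ne_of_ne (by rintro rfl; exact haT hi)
      (by rintro rfl; exact haT hj))
  have hsub : T ⊆ F.map (Equiv.swap i j).toEmbedding ↔ T ⊆ F := by
    conv_lhs => rw [← hT, map_subset_map]
  simp only [unanimityGame, hsub]

variable [Fintype N]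

lemma shapleyValue_unanimityGame_of_notMem (hi : i ∉ T) :
    shapleyValue i (unanimityGame K T) = 0 :=
  shapleyValue_eq_zero_of_null fun F ↦ by
    simp only [unanimityGame, subset_insert_iff_of_notMem hi]

lemma shapleyValue_unanimityGame_congr (hi : i ∈ T) (hj : j ∈ T) :
    shapleyValue j (unanimityGame K T) = shapleyValue i (unanimityGame K T) := by
  simpa only [Equiv.swap_apply_left, unanimityGame_map_swap K hi hj] using
    shapleyValue_apply_equiv (Equiv.swap i j) i (unanimityGame K T)

theorem shapleyValue_unanimityGame [CharZero K] (T : Finset N) (i : N) :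
    shapleyValue i (unanimityGame K T) = (if i ∈ T then 1 else 0) / (#T : K) := by
  split_ifs with hi
  · have hT : T ≠ ∅ := ne_empty_of_mem hi
    rw [eq_div_iff (by simpa using hT)]
    calc shapleyValue i (unanimityGame K T) * #T
        = ∑ j ∈ T, shapleyValue j (unanimityGame K T) := by
          rw [sum_congr rfl fun j hj ↦ shapleyValue_unanimityGame_congr K hi hj, sum_const,
            nsmul_eq_mul, mul_comm]
      _ = ∑ j, shapleyValue j (unanimityGame K T) :=
          sum_subset (subset_univ T) fun j _ hj ↦ shapleyValue_unanimityGame_of_notMem K hj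
      _ = 1 := by rw [sum_shapleyValue]; simp [unanimityGame, hT]
  · rw [shapleyValue_unanimityGame_of_notMem K hi, zero_div]

end Unanimity

theorem shapley_value_multi_session_A13_general
    {K N ι : Type*} [Field K] [CharZero K] [Fintype N] [DecidableEq N]
    (S : Finset ι) (ns : ι → ℕ) (P : ι → ℕ → N) (r : ι → ℕ → K)
    (hP : ∀ s ∈ S, ∀ k, 1 ≤ k → k ≤ ns s → P s k ≠ P s 0)
    (Vt : Finset N → K)
    (hVt : ∀ F : Finset N, Vt F = ∑ s ∈ S, ∑ k ∈ Icc 1 (ns s),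
      if ({P s 0, P s k} : Finset N) ⊆ F then r s k else 0)
    (i : N) :
    shapleyValue i Vt = ∑ s ∈ S, ∑ k ∈ Icc 1 (ns s),
      (if i ∈ ({P s 0, P s k} : Finset N) then (1 : K) else 0) / 2 * r s k := by
  have hV : Vt = ∑ s ∈ S, ∑ k ∈ Icc 1 (ns s), r s k • unanimityGame K {P s 0, P s k} := by
    ext F
    simp [hVt, unanimityGame]
  simp only [hV, map_sum, map_smul, shapleyValue_unanimityGame, smul_eq_mul]
  refine sum_congr rfl fun s hs ↦ sum_congr rfl fun k hk ↦ ?_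
  obtain ⟨hk₁, hk₂⟩ := mem_Icc.1 hk
  rw [card_pair (hP s hs k hk₁ hk₂).symm, Nat.cast_ofNat, mul_comm]

/-- For the multi-session game `Ṽ` under Assumptions 1 and 3, the
Shapley value of player `i` equals
`Σ_{s ∈ S} Σ_{k=1}^{n_s} ([i ∈ {P_s(0),P_s(k)}] / 2) · r_s(k)`. -/
theorem shapley_value_multi_session_A13
    {N : Type*} [Fintype N] [DecidableEq N] {ι : Type*}
    (wp : N) (S : Finset ι) (ns : ι → ℕ) (P : ι → ℕ → N) (r : ι → ℕ → ℝ)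
    (hns : ∀ s ∈ S, 1 ≤ ns s)
    (hP0 : ∀ s ∈ S, P s 0 = wp)
    (hPk : ∀ s ∈ S, ∀ k, 1 ≤ k → k ≤ ns s → P s k ≠ wp)
    (Vt : Finset N → ℝ)
    (hVt : ∀ F : Finset N, Vt F = ∑ s ∈ S, ∑ k ∈ Finset.Icc 1 (ns s),
      if ({P s 0, P s k} : Finset N) ⊆ F then r s k else 0)
    (i : N) :
    (∑ F ∈ (Finset.univ.erase i).powerset,
        ((F.card.factorial * (Fintype.card N - F.card - 1).factorial : ℝ) /
          (Fintype.card N).factorial) * (Vt (insert i F) - Vt F))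
      = ∑ s ∈ S, ∑ k ∈ Finset.Icc 1 (ns s),
          (if i ∈ ({P s 0, P s k} : Finset N) then (1 : ℝ) else 0) / 2 * r s k :=
  (shapleyValue_apply i Vt).symm.trans <|
    shapley_value_multi_session_A13_general S ns P r
      (fun s hs k h₁ h₂ ↦ (hP0 s hs).symm ▸ hPk s hs k h₁ h₂) Vt hVt i
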